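/- arXiv:1410.3125 — 2 statements merged into one kernel-verified Lean document; each statement's English description precedes it below -/
import Mathlib

section
/- Let (A, b, c) be an LP in dual form with A an m×n real matrix, and let (X_P, X_Q) be a fractional automorphism of (A, b, c) in which X_P is the partition matrix of a partition U of the column indices with normalized incidence matrix B (an n×k matrix). Then the original and the reduced LP attain exactly the same objective values on their feasible sets: for every x ∈ ℝ^n with A·x ≤ b entrywise there exists y ∈ ℝ^k with A·B·y ≤ b entrywise and ⟨Bᵀ·c, y⟩ = ⟨c, x⟩; and for every y ∈ ℝ^k with A·B·y ≤ b entrywise there exists x ∈ ℝ^n with A·x ≤ b entrywise and ⟨c, x⟩ = ⟨Bᵀ·c, y⟩. -/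
open Matrix

/-- A square real matrix is doubly stochastic. -/
def IsDoublyStochastic {m : ℕ} (S : Matrix (Fin m) (Fin m) ℝ) : Prop :=
  (∀ i j, 0 ≤ S i j) ∧ (∀ i, ∑ j, S i j = 1) ∧ (∀ j, ∑ i, S i j = 1)

/-- A fractional automorphism of the LP `(A, b, c)` in dual form. -/
def IsFractionalAutomorphism {m n : ℕ} (A : Matrix (Fin m) (Fin n) ℝ)
    (b : Fin m → ℝ) (c : Fin n → ℝ)
    (XP : Matrix (Fin n) (Fin n) ℝ) (XQ : Matrix (Fin m) (Fin m) ℝ) : Prop :=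
  IsDoublyStochastic XP ∧ IsDoublyStochastic XQ ∧
    A * XP = XQ * A ∧ XP.vecMul c = c ∧ XQ.mulVec b = b

/-- The partition matrix of a partition (given by the class map `f`). -/
noncomputable def partitionMatrix {n k : ℕ} (f : Fin n → Fin k) :
    Matrix (Fin n) (Fin n) ℝ :=
  fun i j =>
    if f i = f j then (1 : ℝ) / ((Finset.univ.filter fun l => f l = f i).card : ℝ)
    else 0

/-- The normalized incidence matrix of a partition. -/
noncomputable def incidenceMatrix {n k : ℕ} (f : Fin n → Fin k) :
    Matrix (Fin n) (Fin k) ℝ :=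
  fun i m =>
    if f i = m then (1 : ℝ) / Real.sqrt ((Finset.univ.filter fun l => f l = m).card : ℝ)
    else 0

/-!
The partition matrix factors as `P = B * Bᵀ`. Points of the reduced LP lift along `B`, with the same
slack and the same value. Conversely, `x` is sent to `Bᵀ *ᵥ x`, whose lift is `P *ᵥ x`. This point
is again feasible: `A * P = Q * A` turns `A *ᵥ (P *ᵥ x)` into `Q *ᵥ (A *ᵥ x)`, which the nonnegative
matrix `Q` keeps below `Q *ᵥ b = b`. Its value is that of `x` because `c ᵥ* P = c`.
-/

theorem incidenceMatrix_mul_transpose {n k : ℕ} (f : Fin n → Fin k) :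
    incidenceMatrix f * (incidenceMatrix f)ᵀ = partitionMatrix f := by
  ext i j
  rw [mul_apply, Finset.sum_eq_single_of_mem (f i) (Finset.mem_univ _)]
  · by_cases h : f i = f j
    · simp only [transpose_apply, incidenceMatrix, partitionMatrix, if_pos h, if_pos h.symm,
        if_true, div_mul_div_comm, one_mul, Real.mul_self_sqrt (Nat.cast_nonneg _)]
    · simp only [transpose_apply, incidenceMatrix, partitionMatrix, if_neg h, if_neg (Ne.symm h),
        mul_zero]
  · intro l _ hl
    rw [incidenceMatrix, if_neg hl.symm, zero_mul]

section OrderedSemiring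

variable {ι κ R : Type*} [Fintype ι] [Semiring R] [PartialOrder R] [IsOrderedRing R]

theorem mulVec_le_mulVec_of_nonneg {M : Matrix κ ι R} {u v : ι → R}
    (hM : ∀ i j, 0 ≤ M i j) (huv : u ≤ v) : M *ᵥ u ≤ M *ᵥ v :=
  fun i => dotProduct_le_dotProduct_of_nonneg_left huv (hM i)

theorem mulVec_mulVec_le_of_mul_eq_mul [Fintype κ] {A : Matrix κ ι R} {P : Matrix ι ι R}
    {Q : Matrix κ κ R} {b : κ → R} {x : ι → R} (hQ : ∀ i j, 0 ≤ Q i j) (hA : A * P = Q * A)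
    (hb : Q *ᵥ b ≤ b) (hx : A *ᵥ x ≤ b) : A *ᵥ (P *ᵥ x) ≤ b :=
  calc
    A *ᵥ (P *ᵥ x) = Q *ᵥ (A *ᵥ x) := by rw [mulVec_mulVec, hA, ← mulVec_mulVec]
    _ ≤ Q *ᵥ b := mulVec_le_mulVec_of_nonneg hQ hx
    _ ≤ b := hb

end OrderedSemiring

theorem lifted_lp_same_values_general {ι κ l R : Type*} [Fintype ι] [Fintype κ] [Fintype l]
    [CommSemiring R] [PartialOrder R] [IsOrderedRing R]
    (A : Matrix κ ι R) (b : κ → R) (c : ι → R)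
    (B : Matrix ι l R) (C : Matrix l ι R) (Q : Matrix κ κ R) (hQ : ∀ i j, 0 ≤ Q i j)
    (hA : A * (B * C) = Q * A) (hc : c ᵥ* (B * C) = c) (hb : Q *ᵥ b ≤ b) :
    (∀ x : ι → R, A *ᵥ x ≤ b → ∃ y : l → R, (A * B) *ᵥ y ≤ b ∧ Bᵀ *ᵥ c ⬝ᵥ y = c ⬝ᵥ x) ∧
    (∀ y : l → R, (A * B) *ᵥ y ≤ b → ∃ x : ι → R, A *ᵥ x ≤ b ∧ c ⬝ᵥ x = Bᵀ *ᵥ c ⬝ᵥ y) := by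
  have value_lift (y : l → R) : Bᵀ *ᵥ c ⬝ᵥ y = c ⬝ᵥ B *ᵥ y := by
    rw [mulVec_transpose, dotProduct_mulVec]
  refine ⟨fun x hx => ⟨C *ᵥ x, ?feasible, ?value⟩,
    fun y hy => ⟨B *ᵥ y, by rwa [mulVec_mulVec], (value_lift y).symm⟩⟩
  case feasible =>
    have hBC : A *ᵥ ((B * C) *ᵥ x) ≤ b := mulVec_mulVec_le_of_mul_eq_mul hQ hA hb hx
    rwa [← mulVec_mulVec, mulVec_mulVec] at hBC
  case value =>
    rw [value_lift, mulVec_mulVec, dotProduct_mulVec, hc]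

/-- The original LP `(A,b,c)` and the reduced LP
`(A·B, b, Bᵀ·c)` attain exactly the same objective values on their
feasible sets. -/
theorem lifted_lp_same_values {m n k : ℕ}
    (A : Matrix (Fin m) (Fin n) ℝ) (b : Fin m → ℝ) (c : Fin n → ℝ)
    (f : Fin n → Fin k) (XQ : Matrix (Fin m) (Fin m) ℝ)
    (hFA : IsFractionalAutomorphism A b c (partitionMatrix f) XQ) :
    (∀ x : Fin n → ℝ, A.mulVec x ≤ b →
      ∃ y : Fin k → ℝ, (A * incidenceMatrix f).mulVec y ≤ b ∧
        (incidenceMatrix f)ᵀ.mulVec c ⬝ᵥ y = c ⬝ᵥ x) ∧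
    (∀ y : Fin k → ℝ, (A * incidenceMatrix f).mulVec y ≤ b →
      ∃ x : Fin n → ℝ, A.mulVec x ≤ b ∧
        c ⬝ᵥ x = (incidenceMatrix f)ᵀ.mulVec c ⬝ᵥ y) := by
  obtain ⟨-, ⟨hQ, -, -⟩, hA, hc, hb⟩ := hFA
  rw [← incidenceMatrix_mul_transpose] at hA hc
  exact lifted_lp_same_values_general A b c _ _ XQ hQ hA hc hb.le
end

section
/- Let A be an m×n real matrix, let Q be a partition of the row indices and P a partition of the column indices, and suppose (Q, P) is sum-equitable for A: for every row class R ∈ Q, every pair of rows i, i' ∈ R, and every column class C ∈ P, Σ_{j∈C} A_{ij} = Σ_{j∈C} A_{i'j}; and for every column class C ∈ P, every pair of columns j, j' ∈ C, and every row class R ∈ Q, Σ_{i∈R} A_{ij} = Σ_{i∈R} A_{ij'}. Moreover, let b ∈ ℝ^m be constant on the classes of Q and c ∈ ℝ^n be constant on the classes of P. Then the pair (X_P, X_Q) of partition matrices of P and Q is a fractional automorphism of the LP (A, b, c): X_P and X_Q are doubly stochastic, A·X_P = X_Q·A, cᵀ·X_P = cᵀ, and X_Q·b = b. -/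
open Matrix

/-!
Multiplying by the partition matrix of `Q` on the left averages each column over the row classes, so
it fixes every matrix whose rows are constant along `Q`. Equitability of the row sums says that
`A * X_P` is such a matrix, whence `X_Q * (A * X_P) = A * X_P`. Transposing, equitability of the
column sums gives `X_Q * A * X_P = X_Q * A`. Comparing the two yields `A * X_P = X_Q * A`.
-/

section AveragingMatrix

open Finset

variable {ι κ α K : Type*} [Fintype ι] [DecidableEq α] [Semifield K]

variable (K) in
/-- The partition matrix of the partition of `ι` into the fibers of `f`, over an arbitrary semifield
and finite index type: multiplication by it averages a vector over each fiber. -/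
def averagingMatrix (f : ι → α) : Matrix ι ι K :=
  of fun i j => if f i = f j then (#{l | f l = f i} : K)⁻¹ else 0

lemma averagingMatrix_isSymm (f : ι → α) : (averagingMatrix K f).IsSymm := by
  refine IsSymm.ext fun i j => ?_
  by_cases h : f i = f j
  · simp only [averagingMatrix, of_apply, h]
  · simp only [averagingMatrix, of_apply, if_neg h, if_neg (Ne.symm h)]

lemma vecMul_averagingMatrix (f : ι → α) (v : ι → K) :
    v ᵥ* averagingMatrix K f = averagingMatrix K f *ᵥ v := by
  rw [← mulVec_transpose, (averagingMatrix_isSymm f).eq]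

lemma averagingMatrix_mulVec_apply (f : ι → α) (v : ι → K) (i : ι) :
    (averagingMatrix K f *ᵥ v) i = (∑ j with f j = f i, v j) / #{j | f j = f i} := by
  simp only [mulVec, dotProduct, averagingMatrix, of_apply, ite_mul, zero_mul, ← sum_filter,
    ← mul_sum, eq_comm (a := f i), div_eq_inv_mul]

lemma mul_averagingMatrix_apply (A : Matrix κ ι K) (f : ι → α) (k : κ) (i : ι) :
    (A * averagingMatrix K f) k i = (∑ j with f j = f i, A k j) / #{j | f j = f i} := by
  rw [mul_apply_eq_vecMul, vecMul_averagingMatrix, averagingMatrix_mulVec_apply]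

lemma averagingMatrix_mulVec_of_factorsThrough [CharZero K] {f : ι → α} {v : ι → K}
    (hv : v.FactorsThrough f) : averagingMatrix K f *ᵥ v = v := by
  ext i
  have card_ne_zero : (#{j | f j = f i} : K) ≠ 0 :=
    Nat.cast_ne_zero.mpr (card_ne_zero_of_mem (mem_filter_univ i |>.mpr rfl))
  have sum_eq : ∑ j with f j = f i, v j = #{j | f j = f i} * v i := by
    rw [← nsmul_eq_mul]
    exact sum_eq_card_nsmul fun j hj => hv (mem_filter_univ j |>.mp hj)
  rw [averagingMatrix_mulVec_apply, sum_eq, mul_div_cancel_left₀ _ card_ne_zero]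

lemma averagingMatrix_mul_of_factorsThrough [CharZero K] {f : ι → α} {M : Matrix ι κ K}
    (hM : M.FactorsThrough f) : averagingMatrix K f * M = M := by
  ext i j
  have hcol : (M.col j).FactorsThrough f := hM.comp_left fun row => row j
  exact congrFun (averagingMatrix_mulVec_of_factorsThrough hcol) i

variable [LinearOrder K] [IsStrictOrderedRing K]

lemma averagingMatrix_nonneg (f : ι → α) (i j : ι) : 0 ≤ averagingMatrix K f i j := by
  rw [averagingMatrix, of_apply]
  split_ifs <;> positivity

lemma averagingMatrix_mem_doublyStochastic [DecidableEq ι] (f : ι → α) :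
    averagingMatrix K f ∈ doublyStochastic K ι := by
  have mulVec_one : averagingMatrix K f *ᵥ 1 = 1 :=
    averagingMatrix_mulVec_of_factorsThrough fun _ _ _ => rfl
  exact mem_doublyStochastic.mpr
    ⟨averagingMatrix_nonneg f, mulVec_one, (vecMul_averagingMatrix f 1).trans mulVec_one⟩

end AveragingMatrix

section RowEquitable

variable {ι κ α β K : Type*} [Fintype κ] [DecidableEq β]

/-- Row equitability, the first half of sum-equitability: rows in the same fiber of `f` have the
same sum over each fiber of `g`. The second half is row equitability of the transpose. -/
def IsRowEquitable {M : Type*} [AddCommMonoid M] (A : Matrix ι κ M) (f : ι → α)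
    (g : κ → β) : Prop :=
  ∀ C, (fun i => ∑ j with g j = C, A i j).FactorsThrough f

variable [Semifield K] {A : Matrix ι κ K} {f : ι → α} {g : κ → β}

lemma IsRowEquitable.factorsThrough_mul_averagingMatrix (h : IsRowEquitable A f g) :
    (A * averagingMatrix K g).FactorsThrough f := by
  intro i i' hi
  ext j
  rw [mul_averagingMatrix_apply, mul_averagingMatrix_apply]
  exact congrArg (· / _) (h (g j) hi)

variable [Fintype ι] [DecidableEq α]

lemma IsRowEquitable.averagingMatrix_mul_mul_averagingMatrix [CharZero K]
    (h : IsRowEquitable A f g) :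
    averagingMatrix K f * (A * averagingMatrix K g) = A * averagingMatrix K g :=
  averagingMatrix_mul_of_factorsThrough h.factorsThrough_mul_averagingMatrix

lemma IsRowEquitable.mul_averagingMatrix_eq_averagingMatrix_mul [CharZero K]
    (hrow : IsRowEquitable A f g) (hcol : IsRowEquitable Aᵀ g f) :
    A * averagingMatrix K g = averagingMatrix K f * A := by
  have averaged_of_col :
      averagingMatrix K f * A * averagingMatrix K g = averagingMatrix K f * A := by
    simpa only [transpose_mul, transpose_transpose, (averagingMatrix_isSymm _).eq] using
      congrArg transpose hcol.averagingMatrix_mul_mul_averagingMatrix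
  calc
    A * averagingMatrix K g = averagingMatrix K f * (A * averagingMatrix K g) :=
      hrow.averagingMatrix_mul_mul_averagingMatrix.symm
    _ = averagingMatrix K f * A * averagingMatrix K g := (Matrix.mul_assoc _ _ _).symm
    _ = averagingMatrix K f * A := averaged_of_col

theorem sum_equitable_gives_fractionalAutomorphism_general [LinearOrder K]
    [IsStrictOrderedRing K] [DecidableEq ι] [DecidableEq κ] {b : ι → K} {c : κ → K}
    (hrow : IsRowEquitable A f g) (hcol : IsRowEquitable Aᵀ g f)
    (hb : b.FactorsThrough f) (hc : c.FactorsThrough g) :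
    averagingMatrix K g ∈ doublyStochastic K κ ∧ averagingMatrix K f ∈ doublyStochastic K ι ∧
      A * averagingMatrix K g = averagingMatrix K f * A ∧
      c ᵥ* averagingMatrix K g = c ∧ averagingMatrix K f *ᵥ b = b :=
  ⟨averagingMatrix_mem_doublyStochastic g, averagingMatrix_mem_doublyStochastic f,
    hrow.mul_averagingMatrix_eq_averagingMatrix_mul hcol,
    (vecMul_averagingMatrix g c).trans (averagingMatrix_mulVec_of_factorsThrough hc),
    averagingMatrix_mulVec_of_factorsThrough hb⟩

end RowEquitable

lemma isDoublyStochastic_iff_mem_doublyStochastic {m : ℕ} {S : Matrix (Fin m) (Fin m) ℝ} :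
    IsDoublyStochastic S ↔ S ∈ doublyStochastic ℝ (Fin m) :=
  mem_doublyStochastic_iff_sum.symm

lemma partitionMatrix_eq_averagingMatrix {n k : ℕ} (f : Fin n → Fin k) :
    partitionMatrix f = averagingMatrix ℝ f := by
  ext i j
  simp only [partitionMatrix, averagingMatrix, of_apply, one_div]

/-- If `(Q, P)` is sum-equitable for `A` (rows partitioned by
`fR : Fin m → Fin q`, columns by `fC : Fin n → Fin p`), `b` is constant on the
classes of `Q`, and `c` is constant on the classes of `P`, then the pair of
partition matrices `(X_P, X_Q)` is a fractional automorphism of `(A, b, c)`. -/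
theorem sum_equitable_gives_fractionalAutomorphism {m n p q : ℕ}
    (A : Matrix (Fin m) (Fin n) ℝ) (b : Fin m → ℝ) (c : Fin n → ℝ)
    (fR : Fin m → Fin q) (fC : Fin n → Fin p)
    (hrow : ∀ i i' : Fin m, fR i = fR i' → ∀ C : Fin p,
      ∑ j ∈ Finset.univ.filter (fun j => fC j = C), A i j =
        ∑ j ∈ Finset.univ.filter (fun j => fC j = C), A i' j)
    (hcol : ∀ j j' : Fin n, fC j = fC j' → ∀ R : Fin q,
      ∑ i ∈ Finset.univ.filter (fun i => fR i = R), A i j =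
        ∑ i ∈ Finset.univ.filter (fun i => fR i = R), A i j')
    (hb : ∀ i i' : Fin m, fR i = fR i' → b i = b i')
    (hc : ∀ j j' : Fin n, fC j = fC j' → c j = c j') :
    IsFractionalAutomorphism A b c (partitionMatrix fC) (partitionMatrix fR) := by
  simpa only [IsFractionalAutomorphism, isDoublyStochastic_iff_mem_doublyStochastic,
    partitionMatrix_eq_averagingMatrix] using sum_equitable_gives_fractionalAutomorphism_general
      (fun C i i' h => hrow i i' h C) (fun R j j' h => hcol j j' h R) hb hc
end
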